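/- For every integer k ≥ 2 there exists a constant C_k > 0 such that for all integers V₁, U₂, …, U_k ≥ 1 and every sign ε₁ ∈ {−1, 1}: ∑ τ_k(u₂)⋯τ_k(u_k)·τ_k(ε₁v₁ + u₂u₃⋯u_k) ≤ C_k · L_k(V₁U₂⋯U_k), where the sum runs over integers v₁, u₂, …, u_k ≥ 1 with U_i ≤ u_i < 2U_i for each 2 ≤ i ≤ k and 1 ≤ v₁ ≤ V₁, and where L_k(r) := r·(1 + log r)^{k²+2} for r ≥ 1 and log denotes the natural logarithm. -/

import Mathlib

/-- `τ_k(m)` for `m : ℤ`: the number of `k`-tuples of positive integers with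
product `m`; in particular `τ_k(m) = 0` for `m ≤ 0`. -/
noncomputable def tauInt (k : ℕ) (m : ℤ) : ℕ :=
  Nat.card {d : Fin k → ℤ // (∀ i, 0 < d i) ∧ ∏ i, d i = m}

section

open Finset

/-- Powers of an arithmetic function for Dirichlet convolution as sums over factorizations. -/
theorem ArithmeticFunction.pow_apply_eq_sum_finMulAntidiag (f : ArithmeticFunction ℕ) (k n : ℕ) :
    (f ^ k) n = ∑ d ∈ Nat.finMulAntidiag k n, ∏ i, f (d i) := by
  induction k generalizing n with
  | zero =>
    by_cases hn : n = 1
    · subst hn; simp [Nat.finMulAntidiag_one]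
    · simp [Nat.finMulAntidiag_zero_left hn, ArithmeticFunction.one_apply_ne hn]
  | succ k ih =>
    rw [pow_succ', ArithmeticFunction.mul_apply]
    simp_rw [ih, mul_sum]
    rw [Finset.sum_sigma']
    refine Finset.sum_bij' (fun x _ => Fin.cons x.1.1 x.2)
      (fun d _ => ⟨(d 0, ∏ i, Fin.tail d i), Fin.tail d⟩) ?_ ?_ ?_ ?_ ?_
    · rintro ⟨⟨a, b⟩, d⟩ h
      simp only [mem_sigma, Nat.mem_divisorsAntidiagonal, Nat.mem_finMulAntidiag] at h
      simp [Nat.mem_finMulAntidiag, Fin.prod_univ_succ, h]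
    · intro d h
      rw [Nat.mem_finMulAntidiag, Fin.prod_univ_succ] at h
      have h0 : d 0 * ∏ i : Fin k, d i.succ ≠ 0 := h.1.symm ▸ h.2
      simp only [mem_sigma, Nat.mem_divisorsAntidiagonal, Nat.mem_finMulAntidiag, Fin.tail]
      exact ⟨h, trivial, right_ne_zero_of_mul h0⟩
    · rintro ⟨⟨a, b⟩, d⟩ h
      simp only [mem_sigma, Nat.mem_divisorsAntidiagonal, Nat.mem_finMulAntidiag] at h
      simp [h.2.1]
    · intro d _
      simp
    · rintro ⟨⟨a, b⟩, d⟩ h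
      simp [Fin.prod_univ_succ]

/-- The `k`-fold divisor function on natural numbers. -/
def tau (k n : ℕ) : ℕ := (ArithmeticFunction.zeta ^ k) n

@[simp] theorem tau_zero_right (k : ℕ) : tau k 0 = 0 := by simp [tau]

theorem tau_eq_card (k n : ℕ) : tau k n = #(Nat.finMulAntidiag k n) := by
  rw [tau, ArithmeticFunction.pow_apply_eq_sum_finMulAntidiag, card_eq_sum_ones]
  refine sum_congr rfl fun d hd => prod_eq_one fun i _ => ?_
  simp [Nat.ne_zero_of_mem_finMulAntidiag hd i]

theorem tauInt_eq_tau (k : ℕ) (m : ℤ) : tauInt k m = tau k m.toNat := by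
  rw [tau_eq_card, tauInt, ← Nat.card_eq_finsetCard]
  refine Nat.card_congr
    { toFun := fun d => ⟨fun i => (d.1 i).toNat, ?_⟩
      invFun := fun d => ⟨fun i => (d.1 i : ℤ), ?_⟩
      left_inv := ?_
      right_inv := ?_ }
  · obtain ⟨d, hd, rfl⟩ := d
    have h : ∏ i, d i = ((∏ i, (d i).toNat : ℕ) : ℤ) := by
      push_cast
      exact prod_congr rfl fun i _ => (Int.toNat_of_nonneg (hd i).le).symm
    have h' : (∏ i, d i).toNat = ∏ i, (d i).toNat := by rw [h, Int.toNat_natCast]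
    rw [Nat.mem_finMulAntidiag, h']
    exact ⟨rfl, prod_ne_zero_iff.2 fun i _ => by have := hd i; omega⟩
  · have hd := d.2
    have h := Nat.mem_finMulAntidiag.1 hd
    refine ⟨fun i => ?_, ?_⟩
    · exact Int.natCast_pos.2 <| Nat.pos_of_ne_zero (Nat.ne_zero_of_mem_finMulAntidiag hd i)
    · rw [← Nat.cast_prod, h.1]
      omega
  · intro d
    ext i
    exact Int.toNat_of_nonneg (d.2.1 i).le
  · intro d
    ext i
    simp

theorem tau_zero_left (n : ℕ) : tau 0 n = if n = 1 then 1 else 0 := by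
  simp [tau, ArithmeticFunction.one_apply]

theorem tau_succ (k n : ℕ) : tau (k + 1) n = ∑ d ∈ n.divisors, tau k d := by
  rw [tau, pow_succ, ArithmeticFunction.mul_zeta_apply]; rfl

theorem tau_one_right (k : ℕ) : tau k 1 = 1 := by
  induction k with
  | zero => simp [tau_zero_left]
  | succ k ih => simp [tau_succ, ih]

theorem tau_prime (k : ℕ) {p : ℕ} (hp : p.Prime) : tau k p = k := by
  induction k with
  | zero => simp [tau_zero_left, hp.ne_one]
  | succ k ih => rw [tau_succ, hp.sum_divisors, ih, tau_one_right]

theorem tau_mul_le (k a b : ℕ) : tau k (a * b) ≤ tau k a * tau k b := by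
  induction k generalizing a b with
  | zero => 
    simp only [tau_zero_left, mul_eq_one]
    split_ifs <;> simp_all
  | succ k ih =>
    simp only [tau_succ, sum_mul_sum, ← sum_product']
    rw [Nat.divisors_mul, mul_def]
    exact (sum_image_le_of_nonneg fun _ _ => Nat.zero_le _).trans
      (sum_le_sum fun x _ => ih _ _)

theorem tau_succ_le_card_divisors_pow (k n : ℕ) : tau (k + 1) n ≤ #n.divisors ^ k := by
  induction k generalizing n with
  | zero =>
    simp only [tau_succ, tau_zero_left, sum_ite_eq', pow_zero]
    split_ifs <;> simp
  | succ k ih =>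
    rw [tau_succ, pow_succ']
    refine (sum_le_card_nsmul _ _ _ fun d hd => (ih d).trans ?_)
    obtain ⟨hdn, hn⟩ := Nat.mem_divisors.1 hd
    exact Nat.pow_le_pow_left (card_le_card (Nat.divisors_subset_of_dvd hn hdn)) _

theorem tau_le_rpow_of_forall_le_prime (m : ℕ) {q α : ℝ} (hq : 0 ≤ q) (hα : 0 ≤ α)
    (hm : (m : ℝ) ≤ q ^ α) {c : ℕ} (hc : c ≠ 0) (h : ∀ p : ℕ, p.Prime → p ∣ c → q ≤ p) :
    (tau m c : ℝ) ≤ (c : ℝ) ^ α := by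
  induction c using induction_on_primes with
  | zero => exact absurd rfl hc
  | one => simp [tau_one_right]
  | prime_mul p a hp ih =>
    have ha : a ≠ 0 := right_ne_zero_of_mul hc
    calc (tau m (p * a) : ℝ) ≤ tau m p * tau m a := mod_cast tau_mul_le m p a
      _ ≤ (p : ℝ) ^ α * (a : ℝ) ^ α := by
        refine mul_le_mul ?_ (ih ha fun r hr hra => h r hr (hra.mul_left p)) (by positivity)
          (by positivity)
        rw [tau_prime m hp]
        exact hm.trans (Real.rpow_le_rpow hq (h p hp (dvd_mul_right p a)) hα)
      _ = ((p * a : ℕ) : ℝ) ^ α := by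
        rw [Nat.cast_mul, Real.mul_rpow (by positivity) (by positivity)]

theorem exists_card_divisors_le_rpow {ε : ℝ} (hε : 0 < ε) :
    ∃ D : ℝ, 1 ≤ D ∧ ∀ n : ℕ, n ≠ 0 → (#n.divisors : ℝ) ≤ D * (n : ℝ) ^ ε := by
  have hl : 0 < Real.log 2 := Real.log_pos one_lt_two
  set K : ℝ := 1 + 1 / (ε * Real.log 2) with hK
  have hK1 : 1 ≤ K := le_add_of_nonneg_right (by positivity)
  set N := ⌈(2 : ℝ) ^ (1 / ε)⌉₊ with hN
  refine ⟨K ^ N, one_le_pow₀ hK1, fun n hn => ?_⟩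
  have key : ∀ p ∈ n.primeFactors, ((n.factorization p + 1 : ℕ) : ℝ) ≤
      (if p < N then K else 1) * (((p ^ n.factorization p : ℕ) : ℝ) ^ ε) := by
    intro p hp
    have hp2 : (2 : ℝ) ≤ p := mod_cast (Nat.prime_of_mem_primeFactors hp).two_le
    set v := n.factorization p
    rw [Nat.cast_pow, ← Real.rpow_natCast, ← Real.rpow_mul (by positivity), mul_comm (v : ℝ),
      Real.rpow_mul (by positivity), Real.rpow_natCast]
    split_ifs with hpN
    · have h2 : 1 + v * (ε * Real.log 2) ≤ ((p : ℝ) ^ ε) ^ v := by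
        calc 1 + v * (ε * Real.log 2) ≤ Real.exp (v * (ε * Real.log 2)) := by
              linarith [Real.add_one_le_exp (v * (ε * Real.log 2))]
          _ = ((2 : ℝ) ^ ε) ^ v := by
              rw [Real.rpow_def_of_pos two_pos, ← Real.exp_nat_mul]; ring_nf
          _ ≤ _ := by gcongr
      calc ((v + 1 : ℕ) : ℝ) ≤ K * (1 + v * (ε * Real.log 2)) := by
            have : K * (1 + v * (ε * Real.log 2)) =
              1 + v * (ε * Real.log 2) + 1 / (ε * Real.log 2) + v := by
              rw [hK]; field_simp; ring
            have h3 : 0 ≤ v * (ε * Real.log 2) := by positivity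
            have h4 : 0 ≤ 1 / (ε * Real.log 2) := by positivity
            push_cast
            linarith
        _ ≤ _ := by gcongr
    · have h2 : (2 : ℝ) ≤ (p : ℝ) ^ ε := by
        calc (2 : ℝ) = ((2 : ℝ) ^ (1 / ε)) ^ ε := by
              rw [← Real.rpow_mul two_pos.le, one_div_mul_cancel hε.ne', Real.rpow_one]
          _ ≤ _ := by
            gcongr
            exact (Nat.le_ceil _).trans (mod_cast not_lt.1 hpN)
      calc ((v + 1 : ℕ) : ℝ) ≤ (2 : ℝ) ^ v := by exact_mod_cast Nat.lt_two_pow_self (n := v)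
        _ ≤ ((p : ℝ) ^ ε) ^ v := by gcongr
        _ = _ := (one_mul _).symm
  rw [Nat.card_divisors hn, Nat.cast_prod]
  calc ∏ p ∈ n.primeFactors, ((n.factorization p + 1 : ℕ) : ℝ)
      ≤ ∏ p ∈ n.primeFactors,
        (if p < N then K else 1) * (((p ^ n.factorization p : ℕ) : ℝ) ^ ε) :=
        prod_le_prod (fun _ _ => by positivity) key
    _ = K ^ #{p ∈ n.primeFactors | p < N} * (n : ℝ) ^ ε := by
        rw [prod_mul_distrib, prod_ite, prod_const, prod_const_one, mul_one,
          Real.finsetProd_rpow _ _ fun _ _ => by positivity, ← Nat.cast_prod]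
        congr 3
        exact Nat.prod_factorization_pow_eq_self hn
    _ ≤ K ^ N * (n : ℝ) ^ ε := by
        gcongr
        calc #{p ∈ n.primeFactors | p < N} ≤ #(range N) :=
            card_le_card fun p hp => mem_range.2 (mem_filter.1 hp).2
          _ = N := card_range N

theorem exists_tau_le_rpow {m : ℕ} (hm : 1 ≤ m) {ε : ℝ} (hε : 0 < ε) :
    ∃ D : ℝ, 1 ≤ D ∧ ∀ n : ℕ, n ≠ 0 → (tau m n : ℝ) ≤ D * (n : ℝ) ^ ε := by
  obtain ⟨k, rfl⟩ := Nat.exists_eq_add_of_le' hm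
  obtain ⟨D, hD, h⟩ := exists_card_divisors_le_rpow (ε := ε / (k + 1)) (by positivity)
  refine ⟨D ^ k, one_le_pow₀ hD, fun n hn => ?_⟩
  have hn1 : (1 : ℝ) ≤ n := mod_cast Nat.one_le_iff_ne_zero.2 hn
  calc (tau (k + 1) n : ℝ) ≤ (#n.divisors : ℝ) ^ k := mod_cast tau_succ_le_card_divisors_pow k n
    _ ≤ (D * (n : ℝ) ^ (ε / (k + 1))) ^ k := by gcongr; exact h n hn
    _ = D ^ k * (n : ℝ) ^ (ε / (k + 1) * k) := by
      rw [mul_pow, ← Real.rpow_natCast ((n : ℝ) ^ _), ← Real.rpow_mul (by positivity)]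
    _ ≤ D ^ k * (n : ℝ) ^ ε := by
      gcongr
      rw [div_mul_eq_mul_div, div_le_iff₀ (by positivity)]
      nlinarith

/-- A number exceeding `w` splits into a smooth part `b ≤ w`, a prime `q` with `b * q > w`,
and a cofactor without prime factors below `q`. -/
theorem exists_smooth_mul_prime_mul_rough {w : ℝ} (hw : 1 ≤ w) (n : ℕ) (hn : n ≠ 0) :
    (n : ℝ) ≤ w ∨ ∃ b q c : ℕ, n = b * q * c ∧ q.Prime ∧ (b : ℝ) ≤ w ∧ w < b * q ∧
      (∀ p : ℕ, p.Prime → p ∣ b → p ≤ q) ∧ ∀ p : ℕ, p.Prime → p ∣ c → q ≤ p := by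
  induction n using Nat.strong_induction_on with
  | _ n ih =>
    refine or_iff_not_imp_left.2 fun hnw => ?_
    rw [not_le] at hnw
    have hn1 : n ≠ 1 := by
      rintro rfl
      exact absurd hnw (by simpa using hw)
    have hne : n.primeFactors.Nonempty :=
      Nat.nonempty_primeFactors.2 (by omega)
    set p := n.primeFactors.max' hne
    have hpm : p ∈ n.primeFactors := max'_mem _ hne
    have hp := Nat.prime_of_mem_primeFactors hpm
    have hmax : ∀ r : ℕ, r.Prime → r ∣ n → r ≤ p := fun r hr hrn =>
      le_max' _ _ (Nat.mem_primeFactors.2 ⟨hr, hrn, hn⟩)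
    obtain ⟨a, ha⟩ := Nat.dvd_of_mem_primeFactors hpm
    have ha0 : a ≠ 0 := by rintro rfl; simp at ha; exact hn ha
    have hlt : a < n := by
      rw [ha]
      exact lt_mul_of_one_lt_left (Nat.pos_of_ne_zero ha0) hp.one_lt
    rcases ih a hlt ha0 with h | ⟨b, q, c, rfl, hq, hb, hbq, hsm, hro⟩
    · refine ⟨a, p, 1, by rw [ha]; ring, hp, h, ?_, fun r hr hra => hmax r hr ?_, ?_⟩
      · rw [ha] at hnw; push_cast at hnw; linarith
      · rw [ha]; exact hra.mul_left _
      · intro r hr h1; exact absurd (Nat.dvd_one.1 h1) hr.ne_one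
    · refine ⟨b, q, c * p, by rw [ha]; ring, hq, hb, hbq, hsm, fun r hr hrc => ?_⟩
      rcases (Nat.Prime.dvd_mul hr).1 hrc with h | h
      · exact hro r hr h
      · rw [(Nat.prime_dvd_prime_iff_eq hr hp).1 h]
        refine hmax q hq ?_
        rw [ha]
        exact (dvd_mul_left q b).mul_right c |>.mul_left p

/-- The largest prime factor of `b`, or `0` if there is none. -/
def largestPrimeFactor (b : ℕ) : ℕ := b.primeFactors.sup id

/-- The exponent attached to primes `q` in the majorant of `tau m`. -/
noncomputable def rankinExponent (m q : ℕ) : ℝ := min (1 / 2) (8 * Real.log m / Real.log q)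

/-- A weight whose sum over the small divisors of `n` dominates `tau m n`. -/
noncomputable def tauWeight (m b : ℕ) : ℝ :=
  tau m b * (b : ℝ) ^ rankinExponent m (largestPrimeFactor b)

theorem rankinExponent_nonneg (m q : ℕ) : 0 ≤ rankinExponent m q :=
  le_min (by norm_num) (div_nonneg (mul_nonneg (by norm_num) (Real.log_natCast_nonneg m))
    (Real.log_natCast_nonneg q))

theorem tauWeight_nonneg (m b : ℕ) : 0 ≤ tauWeight m b := by
  unfold tauWeight; positivity

theorem tau_le_tauWeight (m : ℕ) {b : ℕ} (hb : b ≠ 0) : (tau m b : ℝ) ≤ tauWeight m b :=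
  le_mul_of_one_le_right (by positivity) <| Real.one_le_rpow
    (mod_cast Nat.one_le_iff_ne_zero.2 hb) (rankinExponent_nonneg _ _)

theorem largestPrimeFactor_mul_prime {b q : ℕ} (hb : b ≠ 0) (hq : q.Prime)
    (h : ∀ p : ℕ, p.Prime → p ∣ b → p ≤ q) : largestPrimeFactor (b * q) = q := by
  refine le_antisymm (Finset.sup_le fun p hp => ?_)
    (Finset.le_sup (f := id) (Nat.mem_primeFactors.2
      ⟨hq, dvd_mul_left q b, mul_ne_zero hb hq.ne_zero⟩))
  have hp' := Nat.prime_of_mem_primeFactors hp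
  rcases (Nat.Prime.dvd_mul hp').1 (Nat.dvd_of_mem_primeFactors hp) with h1 | h1
  · exact h p hp' h1
  · exact ((Nat.prime_dvd_prime_iff_eq hp' hq).1 h1).le

theorem tau_le_of_rough {m : ℕ} (hm : 1 ≤ m) {q w : ℝ} (hq : 1 < q) (hw : 1 ≤ w) {c : ℕ}
    (hc : c ≠ 0) (hcw : (c : ℝ) ≤ w ^ 8) (h : ∀ p : ℕ, p.Prime → p ∣ c → q ≤ p) :
    (tau m c : ℝ) ≤ w ^ (8 * Real.log m / Real.log q) := by
  have hα : 0 ≤ Real.logb q m := Real.logb_nonneg hq (mod_cast hm)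
  calc (tau m c : ℝ) ≤ (c : ℝ) ^ Real.logb q m :=
        tau_le_rpow_of_forall_le_prime m (by linarith) hα
          (by rw [Real.rpow_logb (by linarith) hq.ne' (by positivity)]) hc h
    _ ≤ (w ^ 8) ^ Real.logb q m := by gcongr
    _ = w ^ (8 * Real.log m / Real.log q) := by
        rw [← Real.rpow_natCast, ← Real.rpow_mul (by linarith), Real.logb]
        push_cast
        ring_nf

theorem exists_tau_le_mul_tauWeight {m : ℕ} (hm : 1 ≤ m) :
    ∃ D : ℝ, 1 ≤ D ∧ ∀ w : ℝ, 1 < w → ∀ n : ℕ, n ≠ 0 → (n : ℝ) ≤ w ^ 8 →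
      ∃ b : ℕ, b ≠ 0 ∧ b ∣ n ∧ (b : ℝ) ≤ w ^ 2 ∧ (tau m n : ℝ) ≤ D * tauWeight m b := by
  obtain ⟨D, hD, hdiv⟩ := exists_tau_le_rpow hm (ε := 1 / 16) (by norm_num)
  refine ⟨(m : ℝ) ^ 8 + D, by nlinarith [pow_nonneg (Nat.cast_nonneg (α := ℝ) m) 8],
    fun w hw n hn hnw => ?_⟩
  have hm8 : (0 : ℝ) ≤ (m : ℝ) ^ 8 := by positivity
  rcases exists_smooth_mul_prime_mul_rough hw.le n hn with h | ⟨b, q, c, rfl, hq, hb, hbq, hsm, hro⟩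
  · refine ⟨n, hn, dvd_rfl, h.trans (by nlinarith), ?_⟩
    nlinarith [tau_le_tauWeight m hn, tauWeight_nonneg m n]
  have hc0 : c ≠ 0 := right_ne_zero_of_mul hn
  have hb0 : b ≠ 0 := left_ne_zero_of_mul (left_ne_zero_of_mul hn)
  rcases le_or_gt w q with hqw | hqw
  · refine ⟨b, hb0, Dvd.intro _ (mul_assoc b q c).symm, hb.trans (by nlinarith), ?_⟩
    have hqc : ((q * c : ℕ) : ℝ) ≤ w ^ 8 := by
      refine le_trans ?_ hnw
      rw [mul_assoc]
      exact_mod_cast Nat.le_mul_of_pos_left _ (Nat.pos_of_ne_zero hb0)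
    have h1 : (tau m (q * c) : ℝ) ≤ (m : ℝ) ^ 8 := by
      refine (tau_le_of_rough hm hw hw.le (mul_ne_zero hq.ne_zero hc0) hqc
        fun p hp hpd => hqw.trans ?_).trans_eq ?_
      · rcases (Nat.Prime.dvd_mul hp).1 hpd with h | h
        · exact_mod_cast ((Nat.prime_dvd_prime_iff_eq hp hq).1 h).ge
        · exact_mod_cast hro p hp h
      · rw [mul_div_assoc, mul_comm, Real.rpow_mul (by linarith), ← Real.logb,
          Real.rpow_logb (by linarith) hw.ne' (by positivity)]
        exact Real.rpow_natCast _ 8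
    calc (tau m (b * q * c) : ℝ) ≤ tau m b * tau m (q * c) := by
          rw [mul_assoc]; exact_mod_cast tau_mul_le m b (q * c)
      _ ≤ tauWeight m b * ((m : ℝ) ^ 8 + D) :=
          mul_le_mul (tau_le_tauWeight m hb0) (by linarith) (by positivity) (tauWeight_nonneg _ _)
      _ = _ := mul_comm _ _
  · have hq1 : (1 : ℝ) < q := mod_cast hq.one_lt
    have hcw : (c : ℝ) ≤ w ^ 8 :=
      le_trans (mod_cast Nat.le_mul_of_pos_left _
        (Nat.pos_of_ne_zero (left_ne_zero_of_mul hn))) hnw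
    refine ⟨b * q, left_ne_zero_of_mul hn, dvd_mul_right _ _, ?_, ?_⟩
    · push_cast
      nlinarith
    have hσ := rankinExponent_nonneg m q
    have h1 : (tau m c : ℝ) ≤ ((m : ℝ) ^ 8 + D) * w ^ rankinExponent m q := by
      have hpos : 0 ≤ w ^ rankinExponent m q := by positivity
      rcases le_total (8 * Real.log m / Real.log q) (1 / 2) with hle | hle
      · have := tau_le_of_rough hm hq1 hw.le hc0 hcw fun p hp hpd => mod_cast hro p hp hpd
        rw [rankinExponent, min_eq_right hle] at hpos ⊢
        nlinarith
      · rw [rankinExponent, min_eq_left hle] at hpos ⊢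
        calc (tau m c : ℝ) ≤ D * (c : ℝ) ^ (1 / 16 : ℝ) := hdiv c hc0
          _ ≤ D * (w ^ 8) ^ (1 / 16 : ℝ) := by gcongr
          _ = D * w ^ (1 / 2 : ℝ) := by
              rw [← Real.rpow_natCast, ← Real.rpow_mul (by linarith)]
              norm_num
          _ ≤ _ := by nlinarith
    calc (tau m (b * q * c) : ℝ) ≤ tau m (b * q) * tau m c := mod_cast tau_mul_le m (b * q) c
      _ ≤ tau m (b * q) * (((m : ℝ) ^ 8 + D) * ((b * q : ℕ) : ℝ) ^ rankinExponent m q) := by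
          refine mul_le_mul_of_nonneg_left (h1.trans ?_) (by positivity)
          gcongr
          push_cast
          exact hbq.le
      _ = _ := by
          rw [tauWeight, largestPrimeFactor_mul_prime hb0 hq hsm]
          ring

theorem sum_primesBelow_log_div_le {n : ℕ} (hn : n ≠ 0) :
    ∑ p ∈ (n + 1).primesBelow, Real.log p / p ≤ 2 * Real.log n := by
  have hn0 : (0 : ℝ) < n := mod_cast Nat.pos_of_ne_zero hn
  have hdvd : ∏ p ∈ (n + 1).primesBelow, p ^ (n / p) ∣ n.factorial := by
    refine Finset.prod_dvd_of_isRelPrime (fun p hp q hq hpq => ?_) fun p hp => ?_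
    · refine Nat.coprime_iff_isRelPrime.1 ?_
      exact Nat.Coprime.pow _ _ ((Nat.coprime_primes (Nat.prime_of_mem_primesBelow hp)
        (Nat.prime_of_mem_primesBelow hq)).2 hpq)
    · rw [(Nat.prime_of_mem_primesBelow hp).pow_dvd_factorial_iff (b := Nat.log p n + 2) (by omega)]
      simpa using single_le_sum (f := fun i => n / p ^ i) (fun _ _ => Nat.zero_le _)
        (show 1 ∈ Ico 1 (Nat.log p n + 2) by simp)
  have hle : ∏ p ∈ (n + 1).primesBelow, p ^ (n / p) ≤ n ^ n :=
    (Nat.le_of_dvd n.factorial_pos hdvd).trans (Nat.factorial_le_pow n)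
  have hlog : ∑ p ∈ (n + 1).primesBelow, ((n / p : ℕ) : ℝ) * Real.log p ≤ n * Real.log n := by
    have h := Real.log_le_log (mod_cast prod_pos fun p hp =>
      pow_pos (Nat.prime_of_mem_primesBelow hp).pos _) (Nat.cast_le (α := ℝ).2 hle)
    rw [Nat.cast_prod, Real.log_prod (fun p hp => by
      have := (Nat.prime_of_mem_primesBelow hp).ne_zero
      positivity)] at h
    simpa [Real.log_pow] using h
  rw [← mul_le_mul_iff_right₀ hn0]
  calc (n : ℝ) * ∑ p ∈ (n + 1).primesBelow, Real.log p / p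
      ≤ ∑ p ∈ (n + 1).primesBelow, 2 * (((n / p : ℕ) : ℝ) * Real.log p) := by
        rw [mul_sum]
        refine sum_le_sum fun p hp => ?_
        have hp0 := (Nat.prime_of_mem_primesBelow hp).pos
        have hpn : p ≤ n := Nat.lt_succ_iff.1 (Nat.lt_of_mem_primesBelow hp)
        have h1 : n ≤ 2 * (n / p) * p := by
          have := Nat.div_add_mod n p
          have h2 := Nat.mod_lt n hp0
          have h3 : 1 ≤ n / p := (Nat.one_le_div_iff hp0).2 hpn
          nlinarith
        have h2 : (n : ℝ) / p ≤ 2 * ((n / p : ℕ) : ℝ) := by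
          rw [div_le_iff₀ (by positivity)]
          exact_mod_cast h1
        calc (n : ℝ) * (Real.log p / p) = n / p * Real.log p := by ring
          _ ≤ 2 * ((n / p : ℕ) : ℝ) * Real.log p := by
            have := Real.log_natCast_nonneg p
            gcongr
          _ = _ := by ring
    _ ≤ n * (2 * Real.log n) := by
        rw [← mul_sum]
        linarith

/-- The completely multiplicative function `n ↦ n ^ s`. -/
noncomputable def natRpowHom (s : ℝ) : ℕ →* ℝ where
  toFun n := (n : ℝ) ^ s
  map_one' := by simp
  map_mul' a b := by rw [Nat.cast_mul, Real.mul_rpow (by positivity) (by positivity)]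

theorem natRpowHom_apply (s : ℝ) (n : ℕ) : natRpowHom s n = (n : ℝ) ^ s := rfl

theorem prod_primesBelow_inv_le {η : ℝ} (hη : 0 < η) (N : ℕ) :
    ∏ p ∈ N.primesBelow, (1 - (p : ℝ) ^ (-(1 + η)))⁻¹ ≤ 1 + 1 / η := by
  have hs : Summable fun n : ℕ => (n : ℝ) ^ (-(1 + η)) :=
    Real.summable_nat_rpow.2 (by linarith)
  have h1 := EulerProduct.prod_primesBelow_geometric_eq_tsum_smoothNumbers
    (f := natRpowHom (-(1 + η))) hs N
  simp only [natRpowHom_apply] at h1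
  rw [h1]
  refine (hs.tsum_subtype_le _ _ (fun n => by positivity)).trans ?_
  have h2 := ZetaAsymptotics.zeta_limit_aux1 (s := 1 + η) (by linarith)
  have h3 : 0 ≤ ZetaAsymptotics.termTSum (1 + η) :=
    tsum_nonneg fun n => ZetaAsymptotics.term_nonneg _ _
  rw [hs.tsum_eq_zero_add]
  have h4 : ∀ n : ℕ, ((n + 1 : ℕ) : ℝ) ^ (-(1 + η)) = 1 / ((n : ℝ) + 1) ^ (1 + η) := by
    intro n
    rw [Real.rpow_neg (by positivity), one_div]
    push_cast
    rfl
  simp_rw [h4]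
  rw [Nat.cast_zero, Real.zero_rpow (by linarith)]
  have h5 : 0 ≤ (1 + η) * ZetaAsymptotics.termTSum (1 + η) := by positivity
  rw [add_sub_cancel_left] at h2
  linarith

theorem exp_le_one_add_mul_exp (x : ℝ) : Real.exp x ≤ 1 + x * Real.exp x := by
  have h := Real.add_one_le_exp (-x)
  have h2 : Real.exp (-x) * Real.exp x = 1 := by rw [← Real.exp_add]; simp
  nlinarith [Real.exp_pos x]

theorem inv_one_sub_le_mul_exp {x y : ℝ} (hxy : x ≤ y) (hy : y ≤ 3 / 4) :
    (1 - y)⁻¹ ≤ (1 - x)⁻¹ * Real.exp (4 * (y - x)) := by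
  have h1 := Real.add_one_le_exp (4 * (y - x))
  rw [← div_eq_inv_mul, inv_eq_one_div, div_le_div_iff₀ (by linarith) (by linarith)]
  nlinarith

theorem rpow_neg_half_le {x : ℝ} (hx : 2 ≤ x) : x ^ (-(1 / 2) : ℝ) ≤ 3 / 4 := by
  rw [Real.rpow_neg (by linarith), ← Real.sqrt_eq_rpow]
  refine inv_le_of_inv_le₀ (by norm_num) (Real.le_sqrt_of_sq_le ?_)
  norm_num
  linarith

theorem sum_smoothNumbers_rpow_le {A σ : ℝ} {q : ℕ} (hA : 0 ≤ A) (hq : 2 ≤ q) (hσ0 : 0 ≤ σ)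
    (hσ : σ ≤ 1 / 2) (hσA : σ ≤ A / Real.log q) {F : Finset ℕ}
    (hF : ∀ b ∈ F, b ∈ (q + 1).smoothNumbers) :
    ∑ b ∈ F, (b : ℝ) ^ (σ - 1) ≤
      Real.exp (8 * (A * Real.exp A + 1)) * (1 + Real.log q) := by
  have hlq : 0 < Real.log q := Real.log_pos (mod_cast hq)
  have hbound : ∀ p : ℕ, p.Prime → (p : ℝ) ^ (σ - 1) ≤ 3 / 4 := fun p hp => by
    have hp2 : (2 : ℝ) ≤ p := mod_cast hp.two_le
    exact (Real.rpow_le_rpow_of_exponent_le (by linarith) (by linarith)).trans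
      (rpow_neg_half_le hp2)
  obtain ⟨hs, hsum⟩ := EulerProduct.summable_and_hasSum_smoothNumbers_prod_primesBelow_geometric
    (f := natRpowHom (σ - 1)) (fun {p} hp => by
      rw [natRpowHom_apply, Real.norm_of_nonneg (by positivity)]
      linarith [hbound p hp]) (q + 1)
  simp only [natRpowHom_apply] at hsum
  have h1 : ∑ b ∈ F, (b : ℝ) ^ (σ - 1) ≤
      ∏ p ∈ (q + 1).primesBelow, (1 - (p : ℝ) ^ (σ - 1))⁻¹ := by
    refine le_trans (le_of_eq ?_) (sum_le_hasSum (F.attach.map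
      ⟨fun b => (⟨b.1, hF b.1 b.2⟩ : (q + 1).smoothNumbers), fun a b h =>
        Subtype.ext (congrArg (fun x : (q + 1).smoothNumbers => (x : ℕ)) h)⟩) (fun _ _ => by positivity) hsum)
    rw [sum_map]
    exact (sum_attach F fun b => (b : ℝ) ^ (σ - 1)).symm
  have hdiff : ∀ p ∈ (q + 1).primesBelow,
      (p : ℝ) ^ (-(1 + 1 / Real.log q)) ≤ (p : ℝ) ^ (σ - 1) ∧
      (p : ℝ) ^ (σ - 1) - (p : ℝ) ^ (-(1 + 1 / Real.log q)) ≤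
        (A * Real.exp A + 1) / Real.log q * (Real.log p / p) := by
    intro p hp
    have hp' := Nat.prime_of_mem_primesBelow hp
    have hp1 : (1 : ℝ) < p := mod_cast hp'.one_lt
    have hp0 : (0 : ℝ) < p := by linarith
    have hlp : 0 < Real.log p := Real.log_pos hp1
    have hpq : Real.log p ≤ Real.log q :=
      Real.log_le_log hp0 (mod_cast Nat.lt_succ_iff.1 (Nat.lt_of_mem_primesBelow hp))
    have hη : 0 < 1 / Real.log q := by positivity
    refine ⟨Real.rpow_le_rpow_of_exponent_le hp1.le (by linarith), ?_⟩
    have e1 : (p : ℝ) ^ (σ - 1) = (p : ℝ) ^ σ / p := by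
      rw [Real.rpow_sub hp0, Real.rpow_one]
    have e2 : (p : ℝ) ^ (-(1 + 1 / Real.log q)) = (p : ℝ) ^ (-(1 / Real.log q)) / p := by
      rw [← Real.rpow_sub_one hp0.ne']; ring_nf
    have b1 : (p : ℝ) ^ σ ≤ 1 + A / Real.log q * Real.log p * Real.exp A := by
      have hx0 : 0 ≤ Real.log p * σ := by positivity
      have hx1 : Real.log p * σ ≤ A / Real.log q * Real.log p := by
        rw [mul_comm]; gcongr
      have hx2 : Real.log p * σ ≤ A := by
        calc Real.log p * σ ≤ Real.log q * (A / Real.log q) := by gcongr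
          _ = A := by field_simp
      rw [Real.rpow_def_of_pos hp0]
      calc Real.exp (Real.log p * σ) ≤ 1 + Real.log p * σ * Real.exp (Real.log p * σ) :=
            exp_le_one_add_mul_exp _
        _ ≤ 1 + A / Real.log q * Real.log p * Real.exp A := by gcongr
    have b2 : 1 - Real.log p / Real.log q ≤ (p : ℝ) ^ (-(1 / Real.log q)) := by
      rw [Real.rpow_def_of_pos hp0]
      refine le_trans (le_of_eq ?_) (Real.add_one_le_exp _)
      ring
    rw [e1, e2, ← sub_div, mul_div_assoc', div_le_div_iff_of_pos_right hp0]
    calc (p : ℝ) ^ σ - (p : ℝ) ^ (-(1 / Real.log q))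
        ≤ (1 + A / Real.log q * Real.log p * Real.exp A) - (1 - Real.log p / Real.log q) := by
          linarith
      _ = _ := by ring
  calc ∑ b ∈ F, (b : ℝ) ^ (σ - 1)
      ≤ ∏ p ∈ (q + 1).primesBelow, (1 - (p : ℝ) ^ (σ - 1))⁻¹ := h1
    _ ≤ ∏ p ∈ (q + 1).primesBelow, ((1 - (p : ℝ) ^ (-(1 + 1 / Real.log q)))⁻¹ *
          Real.exp (4 * ((A * Real.exp A + 1) / Real.log q * (Real.log p / p)))) := by
        refine prod_le_prod (fun p hp => ?_) fun p hp => ?_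
        · have := hbound p (Nat.prime_of_mem_primesBelow hp)
          exact inv_nonneg.2 (by linarith)
        · have hb := hbound p (Nat.prime_of_mem_primesBelow hp)
          obtain ⟨hd1, hd2⟩ := hdiff p hp
          refine (inv_one_sub_le_mul_exp hd1 hb).trans ?_
          refine mul_le_mul_of_nonneg_left (Real.exp_le_exp.2 (by linarith)) (inv_nonneg.2 ?_)
          linarith
    _ ≤ (1 + Real.log q) * Real.exp (8 * (A * Real.exp A + 1)) := by
        rw [prod_mul_distrib, ← Real.exp_sum, ← mul_sum, ← mul_sum]
        have hz := prod_primesBelow_inv_le (one_div_pos.2 hlq) (q + 1)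
        rw [one_div_one_div] at hz
        refine mul_le_mul hz (Real.exp_le_exp.2 ?_) (Real.exp_pos _).le (by linarith)
        have hm := sum_primesBelow_log_div_le (n := q) (by omega)
        have hc : 0 ≤ (A * Real.exp A + 1) / Real.log q := by positivity
        calc 4 * ((A * Real.exp A + 1) / Real.log q *
              ∑ p ∈ (q + 1).primesBelow, Real.log p / p)
            ≤ 4 * ((A * Real.exp A + 1) / Real.log q * (2 * Real.log q)) := by gcongr
          _ = 8 * (A * Real.exp A + 1) := by field_simp; ring
    _ = _ := mul_comm _ _

theorem sum_tau_mul_rpow_le (m : ℕ) (s : ℝ) {F : Finset ℕ}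
    (hF : ∀ b ∈ F, b ≠ 0 ∧ ∀ d, d ∣ b → d ∈ F) :
    ∑ b ∈ F, (tau m b : ℝ) * (b : ℝ) ^ s ≤ (∑ b ∈ F, (b : ℝ) ^ s) ^ m := by
  induction m with
  | zero =>
    simp only [tau_zero_left, pow_zero, Nat.cast_ite, Nat.cast_one, Nat.cast_zero, ite_mul,
      zero_mul, sum_ite_eq', one_mul, Real.one_rpow]
    split_ifs <;> norm_num
  | succ m ih =>
    calc ∑ b ∈ F, (tau (m + 1) b : ℝ) * (b : ℝ) ^ s
        = ∑ b ∈ F, ∑ x ∈ b.divisorsAntidiagonal,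
            (tau m x.1 : ℝ) * (x.1 : ℝ) ^ s * (x.2 : ℝ) ^ s := by
          refine sum_congr rfl fun b _ => ?_
          rw [tau_succ, Nat.cast_sum, sum_mul,
            ← Nat.sum_divisorsAntidiagonal (fun d _ => (tau m d : ℝ) * (b : ℝ) ^ s)]
          refine sum_congr rfl fun x hx => ?_
          rw [← (Nat.mem_divisorsAntidiagonal.1 hx).1, Nat.cast_mul,
            Real.mul_rpow (by positivity) (by positivity), mul_assoc]
      _ = ∑ x ∈ F.biUnion Nat.divisorsAntidiagonal,
            (tau m x.1 : ℝ) * (x.1 : ℝ) ^ s * (x.2 : ℝ) ^ s := by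
          refine (sum_biUnion fun a _ b _ hab => disjoint_left.2 fun x hxa hxb => hab ?_).symm
          rw [← (Nat.mem_divisorsAntidiagonal.1 hxa).1, (Nat.mem_divisorsAntidiagonal.1 hxb).1]
      _ ≤ ∑ x ∈ F ×ˢ F, (tau m x.1 : ℝ) * (x.1 : ℝ) ^ s * (x.2 : ℝ) ^ s := by
          refine sum_le_sum_of_subset_of_nonneg (fun x hx => ?_) fun _ _ _ => by positivity
          obtain ⟨b, hb, hx⟩ := mem_biUnion.1 hx
          obtain ⟨rfl, -⟩ := Nat.mem_divisorsAntidiagonal.1 hx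
          exact mem_product.2 ⟨(hF _ hb).2 _ (dvd_mul_right _ _), (hF _ hb).2 _ (dvd_mul_left _ _)⟩
      _ = (∑ b ∈ F, (tau m b : ℝ) * (b : ℝ) ^ s) * ∑ b ∈ F, (b : ℝ) ^ s := by
          rw [sum_mul_sum, sum_product]
      _ ≤ (∑ b ∈ F, (b : ℝ) ^ s) ^ (m + 1) := by
          rw [pow_succ]
          gcongr

theorem largestPrimeFactor_mem {b : ℕ} (hb : 2 ≤ b) : largestPrimeFactor b ∈ b.primeFactors := by
  obtain ⟨p, hp, h⟩ := exists_mem_eq_sup b.primeFactors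
    (Nat.nonempty_primeFactors.2 (by omega)) id
  rw [largestPrimeFactor, h]
  exact hp

theorem le_largestPrimeFactor {b p : ℕ} (hp : p ∈ b.primeFactors) : p ≤ largestPrimeFactor b :=
  le_sup (f := id) hp

/-- Numbers up to `Z` whose largest prime factor is `q` contribute `O((log q) ^ m / q)`. -/
theorem sum_tauWeight_div_le_of_largestPrimeFactor_eq (m Z : ℕ) {q : ℕ} (hq : q.Prime) :
    ∑ b ∈ Icc 2 Z with largestPrimeFactor b = q, tauWeight m b / b ≤
      m * Real.exp (8 * Real.log m) / q *
        (Real.exp (8 * (8 * Real.log m * Real.exp (8 * Real.log m) + 1)) *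
          (1 + Real.log q)) ^ m := by
  set A := 8 * Real.log m with hA
  set σ := rankinExponent m q with hσ
  have hA0 : 0 ≤ A := mul_nonneg (by norm_num) (Real.log_natCast_nonneg m)
  have hq0 : (0 : ℝ) < q := mod_cast hq.pos
  have hlq : 0 < Real.log q := Real.log_pos (mod_cast hq.one_lt)
  set F := {b ∈ Icc 1 Z | b ∈ (q + 1).smoothNumbers} with hFdef
  have hF : ∀ b ∈ F, b ≠ 0 ∧ ∀ d, d ∣ b → d ∈ F := by
    intro b hb
    rw [hFdef, mem_filter, mem_Icc] at hb
    refine ⟨by omega, fun d hd => ?_⟩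
    rw [hFdef, mem_filter, mem_Icc]
    exact ⟨⟨Nat.pos_of_dvd_of_pos hd hb.1.1, (Nat.le_of_dvd hb.1.1 hd).trans hb.1.2⟩,
      Nat.mem_smoothNumbers_of_dvd hb.2 hd⟩
  have hinj : Set.InjOn (fun c => q * c) (F : Set ℕ) := fun a _ b _ h =>
    Nat.eq_of_mul_eq_mul_left hq.pos h
  have hsub : {b ∈ Icc 2 Z | largestPrimeFactor b = q} ⊆ F.image fun c => q * c := by
    intro b hb
    simp only [mem_filter, mem_Icc] at hb
    obtain ⟨⟨hb2, hbZ⟩, hbq⟩ := hb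
    have hdvd : q ∣ b := hbq ▸ Nat.dvd_of_mem_primeFactors (largestPrimeFactor_mem hb2)
    obtain ⟨c, rfl⟩ := hdvd
    have hc0 : 0 < c := Nat.pos_of_ne_zero (by rintro rfl; simp at hb2)
    refine mem_image.2 ⟨c, mem_filter.2 ⟨mem_Icc.2 ⟨hc0, ?_⟩, ?_⟩, rfl⟩
    · exact (Nat.le_mul_of_pos_left c hq.pos).trans hbZ
    · refine Nat.mem_smoothNumbers'.2 fun p hp hpc => Nat.lt_succ_iff.2 ?_
      rw [← hbq]
      exact le_largestPrimeFactor (Nat.mem_primeFactors.2 ⟨hp, hpc.mul_left q, by omega⟩)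
  calc ∑ b ∈ Icc 2 Z with largestPrimeFactor b = q, tauWeight m b / b
      = ∑ b ∈ Icc 2 Z with largestPrimeFactor b = q, (tau m b : ℝ) * (b : ℝ) ^ (σ - 1) := by
        refine sum_congr rfl fun b hb => ?_
        rw [mem_filter, mem_Icc] at hb
        have hb0 : (b : ℝ) ≠ 0 := by
          have : b ≠ 0 := by omega
          exact_mod_cast this
        rw [tauWeight, hb.2, Real.rpow_sub_one hb0, mul_div_assoc]
    _ ≤ ∑ b ∈ F.image fun c => q * c, (tau m b : ℝ) * (b : ℝ) ^ (σ - 1) :=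
        sum_le_sum_of_subset_of_nonneg hsub fun _ _ _ => by positivity
    _ = ∑ c ∈ F, (tau m (q * c) : ℝ) * ((q * c : ℕ) : ℝ) ^ (σ - 1) := sum_image hinj
    _ ≤ ∑ c ∈ F, m * Real.exp A / q * ((tau m c : ℝ) * (c : ℝ) ^ (σ - 1)) := by
        refine sum_le_sum fun c _ => ?_
        have h1 : (tau m (q * c) : ℝ) ≤ m * tau m c := by
          have := tau_mul_le m q c
          rw [tau_prime m hq] at this
          exact_mod_cast this
        have h2 : (q : ℝ) ^ (σ - 1) ≤ Real.exp A / q := by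
          rw [Real.rpow_sub_one hq0.ne']
          gcongr
          rw [Real.rpow_def_of_pos hq0]
          refine Real.exp_le_exp.2 ?_
          calc Real.log q * σ ≤ Real.log q * (A / Real.log q) := by
                gcongr
                exact min_le_right _ _
            _ = A := by field_simp
        rw [Nat.cast_mul, Real.mul_rpow (by positivity) (by positivity)]
        calc (tau m (q * c) : ℝ) * ((q : ℝ) ^ (σ - 1) * (c : ℝ) ^ (σ - 1))
            ≤ (m * tau m c) * (Real.exp A / q * (c : ℝ) ^ (σ - 1)) := by gcongr
          _ = _ := by ring
    _ ≤ m * Real.exp A / q * (∑ c ∈ F, (c : ℝ) ^ (σ - 1)) ^ m := by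
        rw [← mul_sum]
        gcongr
        exact sum_tau_mul_rpow_le m _ hF
    _ ≤ _ := by
        gcongr
        exact sum_smoothNumbers_rpow_le hA0 hq.two_le (rankinExponent_nonneg m q)
          (min_le_left _ _) (min_le_right _ _) fun b hb => (mem_filter.1 hb).2

theorem exists_sum_tauWeight_div_le (m : ℕ) :
    ∃ C : ℝ, 0 ≤ C ∧ ∀ Z : ℕ, 1 ≤ Z →
      ∑ b ∈ Icc 1 Z, tauWeight m b / b ≤ C * (1 + Real.log Z) ^ (m + 1) := by
  set B := Real.exp (8 * (8 * Real.log m * Real.exp (8 * Real.log m) + 1)) with hB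
  set E := m * Real.exp (8 * Real.log m) with hE
  have hE0 : 0 ≤ E := by positivity
  have hB0 : 0 ≤ B := by positivity
  refine ⟨1 + E * B ^ m, by positivity, fun Z hZ => ?_⟩
  have hL : 0 ≤ Real.log Z := Real.log_natCast_nonneg Z
  have hmaps : ∀ b ∈ Icc 2 Z, largestPrimeFactor b ∈ {q ∈ Icc 1 Z | q.Prime} := by
    intro b hb
    rw [mem_Icc] at hb
    have h := largestPrimeFactor_mem hb.1
    have hp := Nat.prime_of_mem_primeFactors h
    exact mem_filter.2 ⟨mem_Icc.2 ⟨hp.one_le, (Nat.le_of_mem_primeFactors h).trans hb.2⟩, hp⟩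
  have hone : tauWeight m 1 / (1 : ℕ) = 1 := by simp [tauWeight, tau_one_right]
  have hharm : ∑ q ∈ Icc 1 Z, (q : ℝ)⁻¹ ≤ 1 + Real.log Z := by
    have := harmonic_le_one_add_log Z
    rwa [harmonic_eq_sum_Icc, Rat.cast_sum, sum_congr rfl fun q _ => by
      rw [Rat.cast_inv, Rat.cast_natCast]] at this
  have htail : ∑ b ∈ Icc 2 Z, tauWeight m b / b ≤ E * B ^ m * (1 + Real.log Z) ^ (m + 1) := by
    rw [← sum_fiberwise_of_maps_to hmaps]
    calc ∑ q ∈ Icc 1 Z with q.Prime, ∑ b ∈ Icc 2 Z with largestPrimeFactor b = q,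
          tauWeight m b / b
        ≤ ∑ q ∈ Icc 1 Z with q.Prime, E * B ^ m * (1 + Real.log Z) ^ m * (q : ℝ)⁻¹ := by
          refine sum_le_sum fun q hq => ?_
          rw [mem_filter, mem_Icc] at hq
          refine (sum_tauWeight_div_le_of_largestPrimeFactor_eq m Z hq.2).trans ?_
          have hq0 : (0 : ℝ) < q := mod_cast hq.2.pos
          have hlq : Real.log q ≤ Real.log Z := Real.log_le_log hq0 (mod_cast hq.1.2)
          have hlq0 : 0 ≤ Real.log q := Real.log_natCast_nonneg q
          calc E / q * (B * (1 + Real.log q)) ^ m ≤ E / q * (B * (1 + Real.log Z)) ^ m := by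
                gcongr
            _ = _ := by rw [mul_pow]; ring
      _ ≤ ∑ q ∈ Icc 1 Z, E * B ^ m * (1 + Real.log Z) ^ m * (q : ℝ)⁻¹ :=
          sum_le_sum_of_subset_of_nonneg (filter_subset _ _) fun _ _ _ => by positivity
      _ ≤ E * B ^ m * (1 + Real.log Z) ^ m * (1 + Real.log Z) := by
          rw [← mul_sum]
          gcongr
      _ = _ := by ring
  rw [← add_sum_Ioc_eq_sum_Icc hZ, hone]
  have h1 : 1 ≤ (1 + Real.log Z) ^ (m + 1) := one_le_pow₀ (by linarith)
  have h2 : Ioc 1 Z = Icc 2 Z := rfl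
  rw [h2]
  linarith

theorem card_le_div_add_one_of_modEq {N L : ℕ} {S : Finset ℕ} (hS : ∀ a ∈ S, a ≤ N)
    (h : ∀ a ∈ S, ∀ b ∈ S, a ≡ b [MOD L]) : #S ≤ N / L + 1 := by
  rw [← card_range (N / L + 1)]
  refine card_le_card_of_injOn (fun a => a / L) (fun a ha => ?_) fun a ha b hb hab => ?_
  · exact mem_coe.2 <| mem_range.2 <| Nat.lt_succ_iff.2 <| Nat.div_le_div_right (hS a ha)
  · have h1 : a % L = b % L := h a ha b hb
    have h2 : a / L = b / L := hab
    rw [← Nat.div_add_mod a L, ← Nat.div_add_mod b L, h1, h2]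

theorem card_pairs_dvd_mul_le {V N b d : ℕ} {ε : ℤ} (hε : ε = 1 ∨ ε = -1) (hb : 0 < b)
    (hd : 0 < d) (h : b * d ≤ 2 * max N V) :
    #{x ∈ Icc 1 V ×ˢ Icc 1 N | b ∣ x.2 ∧ (d : ℤ) ∣ ε * x.1 + x.2} * (b * d) ≤ 3 * (V * N) := by
  have hunit : IsUnit ε := by rcases hε with rfl | rfl <;> decide
  rcases le_total V N with hVN | hVN
  · rw [max_eq_left hVN] at h
    set L := b.lcm d with hL
    set g := b.gcd d with hg
    have hgL : g * L = b * d := Nat.gcd_mul_lcm b d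
    have hg0 : 0 < g := Nat.gcd_pos_of_pos_left _ hb
    have hL0 : 0 < L := Nat.lcm_pos hb hd
    have hL2 : L ≤ 2 * N := by nlinarith
    have hcard : #{x ∈ Icc 1 V ×ˢ Icc 1 N | b ∣ x.2 ∧ (d : ℤ) ∣ ε * x.1 + x.2} ≤
        V / g * (N / L + 1) := by
      rw [← Nat.Ioc_filter_dvd_card_eq_div V g, mul_comm]
      refine card_le_mul_card_image_of_maps_to (f := Prod.fst) (fun x hx => ?_) _ fun v hv => ?_
      · simp only [mem_filter, mem_product, mem_Icc] at hx
        obtain ⟨⟨hv, hn⟩, hbn, hdn⟩ := hx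
        refine mem_filter.2 ⟨mem_Ioc.2 hv, ?_⟩
        have h1 : (g : ℤ) ∣ x.2 := Int.natCast_dvd_natCast.2 ((Nat.gcd_dvd_left b d).trans hbn)
        have h2 : (g : ℤ) ∣ ε * x.1 + x.2 :=
          (Int.natCast_dvd_natCast.2 (Nat.gcd_dvd_right b d)).trans hdn
        exact Int.natCast_dvd_natCast.1 (hunit.dvd_mul_left.1 ((dvd_add_left h1).1 h2))
      · rw [← card_image_of_injOn (f := Prod.snd) fun x hx y hy hxy => ?_]
        · refine card_le_div_add_one_of_modEq (fun a ha => ?_) fun a ha a' ha' => ?_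
          · obtain ⟨x, hx, rfl⟩ := mem_image.1 ha
            simp only [mem_filter, mem_product, mem_Icc] at hx
            exact hx.1.1.2.2
          · obtain ⟨x, hx, rfl⟩ := mem_image.1 ha
            obtain ⟨y, hy, rfl⟩ := mem_image.1 ha'
            simp only [mem_filter, mem_product, mem_Icc] at hx hy
            rw [Nat.modEq_iff_dvd, Int.natCast_dvd]
            refine Nat.lcm_dvd (Int.natCast_dvd.1 ?_) (Int.natCast_dvd.1 ?_)
            · exact dvd_sub (Int.natCast_dvd_natCast.2 hy.1.2.1)
                (Int.natCast_dvd_natCast.2 hx.1.2.1)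
            · have := dvd_sub hy.1.2.2 hx.1.2.2
              rw [hx.2, hy.2] at this
              simpa using this
        · simp only [coe_filter, mem_product, mem_filter, Set.mem_ofPred_eq] at hx hy
          exact Prod.ext (hx.2.trans hy.2.symm) hxy
    calc _ ≤ V / g * (N / L + 1) * (b * d) := Nat.mul_le_mul_right _ hcard
      _ = (V / g * g) * (N / L * L + L) := by rw [← hgL]; ring
      _ ≤ V * (N + 2 * N) := Nat.mul_le_mul (Nat.div_mul_le_self V g)
          (Nat.add_le_add (Nat.div_mul_le_self N L) hL2)
      _ = _ := by ring
  · rw [max_eq_right hVN] at h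
    have hd2 : d ≤ 2 * V := by nlinarith
    have hcard : #{x ∈ Icc 1 V ×ˢ Icc 1 N | b ∣ x.2 ∧ (d : ℤ) ∣ ε * x.1 + x.2} ≤
        N / b * (V / d + 1) := by
      rw [← Nat.Ioc_filter_dvd_card_eq_div N b, mul_comm]
      refine card_le_mul_card_image_of_maps_to (f := Prod.snd) (fun x hx => ?_) _ fun v hv => ?_
      · simp only [mem_filter, mem_product, mem_Icc] at hx
        exact mem_filter.2 ⟨mem_Ioc.2 hx.1.2, hx.2.1⟩
      · rw [← card_image_of_injOn (f := Prod.fst) fun x hx y hy hxy => ?_]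
        · refine card_le_div_add_one_of_modEq (fun a ha => ?_) fun a ha a' ha' => ?_
          · obtain ⟨x, hx, rfl⟩ := mem_image.1 ha
            simp only [mem_filter, mem_product, mem_Icc] at hx
            exact hx.1.1.1.2
          · obtain ⟨x, hx, rfl⟩ := mem_image.1 ha
            obtain ⟨y, hy, rfl⟩ := mem_image.1 ha'
            simp only [mem_filter, mem_product, mem_Icc] at hx hy
            rw [Nat.modEq_iff_dvd]
            have := dvd_sub hy.1.2.2 hx.1.2.2
            rw [hx.2, hy.2, add_sub_add_right_eq_sub, ← mul_sub] at this
            exact hunit.dvd_mul_left.1 this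
        · simp only [coe_filter, mem_product, mem_filter, Set.mem_ofPred_eq] at hx hy
          exact Prod.ext hxy (hx.2.trans hy.2.symm)
    calc _ ≤ N / b * (V / d + 1) * (b * d) := Nat.mul_le_mul_right _ hcard
      _ = (N / b * b) * (V / d * d + d) := by ring
      _ ≤ N * (V + 2 * V) := Nat.mul_le_mul (Nat.div_mul_le_self N b)
          (Nat.add_le_add (Nat.div_mul_le_self V d) hd2)
      _ = _ := by ring

theorem exists_tau_le_sum_tauWeight {m : ℕ} (hm : 1 ≤ m) :
    ∃ D : ℝ, 1 ≤ D ∧ ∀ w : ℝ, 1 < w → ∀ n : ℕ, (n : ℝ) ≤ w ^ 8 →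
      (tau m n : ℝ) ≤ D * ∑ b ∈ Icc 1 ⌊w ^ 2⌋₊, if b ∣ n then tauWeight m b else 0 := by
  obtain ⟨D, hD, h⟩ := exists_tau_le_mul_tauWeight hm
  refine ⟨D, hD, fun w hw n hn => ?_⟩
  have hnn : ∀ b ∈ Icc 1 ⌊w ^ 2⌋₊, (0 : ℝ) ≤ if b ∣ n then tauWeight m b else 0 := by
    intro b _
    split_ifs
    · exact tauWeight_nonneg m b
    · exact le_rfl
  rcases eq_or_ne n 0 with rfl | hn0
  · rw [tau_zero_right, Nat.cast_zero]
    exact mul_nonneg (by linarith) (sum_nonneg hnn)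
  · obtain ⟨b, hb0, hbn, hbw, hb⟩ := h w hw n hn0 hn
    refine hb.trans (mul_le_mul_of_nonneg_left ?_ (by linarith))
    have := single_le_sum hnn (mem_Icc.2 ⟨Nat.one_le_iff_ne_zero.2 hb0, Nat.le_floor hbw⟩)
    simpa [hbn] using this

/-- Upper bound of the expected order for the correlation of two divisor functions. -/
theorem exists_sum_tau_mul_tau_le {m k : ℕ} (hm : 1 ≤ m) (hk : 1 ≤ k) :
    ∃ C : ℝ, 0 ≤ C ∧ ∀ V N : ℕ, 1 ≤ V → 1 ≤ N → ∀ ε : ℤ, (ε = 1 ∨ ε = -1) →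
      ∑ x ∈ Icc 1 V ×ˢ Icc 1 N, (tau m x.2 : ℝ) * (tau k (ε * x.1 + x.2 : ℤ).toNat : ℝ) ≤
        C * (V * N) * (1 + Real.log (2 * max N V : ℕ)) ^ (m + k + 2) := by
  obtain ⟨D₁, hD₁, h₁⟩ := exists_tau_le_sum_tauWeight hm
  obtain ⟨D₂, hD₂, h₂⟩ := exists_tau_le_sum_tauWeight hk
  obtain ⟨C₁, hC₁, hs₁⟩ := exists_sum_tauWeight_div_le m
  obtain ⟨C₂, hC₂, hs₂⟩ := exists_sum_tauWeight_div_le k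
  refine ⟨D₁ * D₂ * (3 * (C₁ * C₂)), by positivity, fun V N hV hN ε hε => ?_⟩
  set Q : ℕ := 2 * max N V with hQ
  have hQ2 : 2 ≤ Q := by have := le_max_left N V; omega
  have hQ2' : (2 : ℝ) ≤ Q := by exact_mod_cast hQ2
  set w : ℝ := (Q : ℝ) ^ (1 / 8 : ℝ) with hw
  have hw1 : 1 < w := Real.one_lt_rpow (by linarith) (by norm_num)
  have hw8 : w ^ 8 = Q := by
    rw [hw, ← Real.rpow_natCast, ← Real.rpow_mul (by linarith)]
    norm_num
  set Z : ℕ := ⌊w ^ 2⌋₊ with hZ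
  have hZ1 : 1 ≤ Z := Nat.le_floor (by rw [Nat.cast_one]; exact one_le_pow₀ hw1.le)
  have hZw : (Z : ℝ) ≤ w ^ 2 := Nat.floor_le (by positivity)
  have hZQ : (Z : ℝ) ≤ Q := hZw.trans (hw8 ▸ pow_le_pow_right₀ hw1.le (by norm_num))
  have hZZ : Z * Z ≤ Q := by
    have : (Z : ℝ) * Z ≤ Q := by
      calc (Z : ℝ) * Z ≤ w ^ 2 * w ^ 2 := by gcongr
        _ = w ^ 4 := by ring
        _ ≤ w ^ 8 := pow_le_pow_right₀ hw1.le (by norm_num)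
        _ = Q := hw8
    exact_mod_cast this
  have hlogZ : 1 + Real.log Z ≤ 1 + Real.log Q := by
    have : (0 : ℝ) < Z := by exact_mod_cast hZ1
    gcongr
  have hlogZ0 : 0 ≤ 1 + Real.log Z := by
    have := Real.log_natCast_nonneg Z
    linarith
  have hterm : ∀ x ∈ Icc 1 V ×ˢ Icc 1 N,
      (tau m x.2 : ℝ) * (tau k (ε * x.1 + x.2 : ℤ).toNat : ℝ) ≤
        D₁ * D₂ * ∑ b ∈ Icc 1 Z, ∑ d ∈ Icc 1 Z,
          if b ∣ x.2 ∧ (d : ℤ) ∣ ε * x.1 + x.2 then tauWeight m b * tauWeight k d else 0 := by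
    intro x hx
    simp only [mem_product, mem_Icc] at hx
    have hle1 : x.2 ≤ Q := by have := le_max_left N V; omega
    have hle2 : (ε * x.1 + x.2 : ℤ).toNat ≤ Q := by
      have := le_max_left N V
      have := le_max_right N V
      rcases hε with rfl | rfl <;> omega
    have e1 := h₁ w hw1 x.2 (by rw [hw8]; exact_mod_cast hle1)
    by_cases hpos : 0 ≤ ε * (x.1 : ℤ) + x.2
    · have e2 := h₂ w hw1 (ε * x.1 + x.2 : ℤ).toNat (by rw [hw8]; exact_mod_cast hle2)
      refine (mul_le_mul e1 e2 (Nat.cast_nonneg _) ((Nat.cast_nonneg _).trans e1)).trans_eq ?_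
      rw [mul_mul_mul_comm, sum_mul_sum]
      congr 1
      refine sum_congr rfl fun b _ => sum_congr rfl fun d _ => ?_
      have hd : d ∣ (ε * x.1 + x.2 : ℤ).toNat ↔ (d : ℤ) ∣ ε * x.1 + x.2 := by
        rw [← Int.natCast_dvd_natCast, Int.toNat_of_nonneg hpos]
      simp only [ite_and, hd]
      split_ifs <;> simp
    · rw [Int.toNat_of_nonpos (by omega), tau_zero_right, Nat.cast_zero, mul_zero]
      refine mul_nonneg (by positivity) (sum_nonneg fun b _ => sum_nonneg fun d _ => ?_)
      split_ifs
      · exact mul_nonneg (tauWeight_nonneg m b) (tauWeight_nonneg k d)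
      · exact le_rfl
  have hcount : ∀ b ∈ Icc 1 Z, ∀ d ∈ Icc 1 Z,
      ∑ x ∈ Icc 1 V ×ˢ Icc 1 N,
          (if b ∣ x.2 ∧ (d : ℤ) ∣ ε * x.1 + x.2 then tauWeight m b * tauWeight k d else 0) ≤
        3 * (V * N) * (tauWeight m b / b * (tauWeight k d / d)) := by
    intro b hb d hd
    rw [mem_Icc] at hb hd
    have hc := card_pairs_dvd_mul_le (V := V) (N := N) hε hb.1 hd.1
      ((Nat.mul_le_mul hb.2 hd.2).trans hZZ)
    rw [← sum_filter, sum_const, nsmul_eq_mul]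
    have hb0 : (0 : ℝ) < b := by exact_mod_cast hb.1
    have hd0 : (0 : ℝ) < d := by exact_mod_cast hd.1
    have hT := mul_nonneg (tauWeight_nonneg m b) (tauWeight_nonneg k d)
    rw [div_mul_div_comm, ← mul_div_assoc, le_div_iff₀ (by positivity), mul_right_comm]
    refine mul_le_mul_of_nonneg_right ?_ hT
    exact_mod_cast hc
  calc _ ≤ ∑ x ∈ Icc 1 V ×ˢ Icc 1 N, D₁ * D₂ * ∑ b ∈ Icc 1 Z, ∑ d ∈ Icc 1 Z,
          (if b ∣ x.2 ∧ (d : ℤ) ∣ ε * x.1 + x.2 then tauWeight m b * tauWeight k d else 0) :=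
        sum_le_sum hterm
    _ = D₁ * D₂ * ∑ b ∈ Icc 1 Z, ∑ d ∈ Icc 1 Z, ∑ x ∈ Icc 1 V ×ˢ Icc 1 N,
          (if b ∣ x.2 ∧ (d : ℤ) ∣ ε * x.1 + x.2 then tauWeight m b * tauWeight k d else 0) := by
        rw [← mul_sum, sum_comm]
        congr 1
        exact sum_congr rfl fun b _ => sum_comm
    _ ≤ D₁ * D₂ * ∑ b ∈ Icc 1 Z, ∑ d ∈ Icc 1 Z,
          3 * (V * N) * (tauWeight m b / b * (tauWeight k d / d)) :=
        mul_le_mul_of_nonneg_left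
          (sum_le_sum fun b hb => sum_le_sum fun d hd => hcount b hb d hd) (by positivity)
    _ = D₁ * D₂ * (3 * (V * N)) *
          ((∑ b ∈ Icc 1 Z, tauWeight m b / b) * ∑ d ∈ Icc 1 Z, tauWeight k d / d) := by
        simp_rw [sum_mul_sum, mul_assoc, mul_sum]
    _ ≤ D₁ * D₂ * (3 * (V * N)) *
          ((C₁ * (1 + Real.log Q) ^ (m + 1)) * (C₂ * (1 + Real.log Q) ^ (k + 1))) := by
        refine mul_le_mul_of_nonneg_left (mul_le_mul ((hs₁ Z hZ1).trans ?_)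
          ((hs₂ Z hZ1).trans ?_) ?_ ?_) (by positivity)
        · gcongr
        · gcongr
        · exact sum_nonneg fun d _ => div_nonneg (tauWeight_nonneg k d) (Nat.cast_nonneg d)
        · exact mul_nonneg hC₁ (pow_nonneg (hlogZ0.trans hlogZ) _)
    _ = _ := by ring

theorem sum_finMulAntidiag_prod_tau (k j n : ℕ) :
    ∑ u ∈ Nat.finMulAntidiag j n, ∏ i, tau k (u i) = tau (k * j) n := by
  rw [tau, pow_mul, ArithmeticFunction.pow_apply_eq_sum_finMulAntidiag]
  rfl

theorem sum_piFinset_prod_tau_mul_le (k j : ℕ) (U : Fin j → ℕ) (hU : ∀ i, 1 ≤ U i)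
    (F : ℕ → ℝ) (hF : ∀ n, 0 ≤ F n) :
    ∑ u ∈ Fintype.piFinset (fun i => Ico (U i) (2 * U i)),
        (∏ i, (tau k (u i) : ℝ)) * F (∏ i, u i) ≤
      ∑ n ∈ Icc 1 (2 ^ j * ∏ i, U i), (tau (k * j) n : ℝ) * F n := by
  have hpos : ∀ u ∈ Fintype.piFinset (fun i => Ico (U i) (2 * U i)), ∏ i, u i ≠ 0 := by
    intro u hu
    refine prod_ne_zero_iff.2 fun i _ => ?_
    have := mem_Ico.1 (Fintype.mem_piFinset.1 hu i)
    have := hU i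
    omega
  have hmaps : ∀ u ∈ Fintype.piFinset (fun i => Ico (U i) (2 * U i)),
      ∏ i, u i ∈ Icc 1 (2 ^ j * ∏ i, U i) := by
    intro u hu
    refine mem_Icc.2 ⟨Nat.one_le_iff_ne_zero.2 (hpos u hu), ?_⟩
    calc ∏ i, u i ≤ ∏ i, 2 * U i :=
          prod_le_prod' fun i _ => (mem_Ico.1 (Fintype.mem_piFinset.1 hu i)).2.le
      _ = _ := by simp [prod_mul_distrib]
  rw [← sum_fiberwise_of_maps_to hmaps]
  refine sum_le_sum fun n _ => ?_
  rw [← sum_finMulAntidiag_prod_tau, Nat.cast_sum, sum_mul]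
  calc _ = ∑ u ∈ Fintype.piFinset (fun i => Ico (U i) (2 * U i)) with ∏ i, u i = n,
          ((∏ i, tau k (u i) : ℕ) : ℝ) * F n := by
        refine sum_congr rfl fun u hu => ?_
        rw [(mem_filter.1 hu).2, Nat.cast_prod]
    _ ≤ _ := by
        refine sum_le_sum_of_subset_of_nonneg (fun u hu => ?_)
          fun u _ _ => mul_nonneg (Nat.cast_nonneg _) (hF n)
        obtain ⟨h1, rfl⟩ := mem_filter.1 hu
        exact Nat.mem_finMulAntidiag.2 ⟨rfl, hpos u h1⟩

end

/-- for every `k ≥ 2` there is `C_k > 0` such that for all integers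
`V₁, U₂, …, U_k ≥ 1` (here `U i = U_{i+2}`, indexed by `i : Fin (k-1)`) and every
sign `ε₁ ∈ {−1, 1}`:
`∑ τ_k(u₂)⋯τ_k(u_k)·τ_k(ε₁v₁ + u₂⋯u_k) ≤ C_k · L_k(V₁U₂⋯U_k)`,
the sum over `1 ≤ v₁ ≤ V₁` and `U_i ≤ u_i < 2U_i`, where
`L_k(r) = r·(1 + log r)^{k²+2}`. -/
theorem stmt11 (k : ℕ) (hk : 2 ≤ k) :
    ∃ C : ℝ, 0 < C ∧ ∀ (V₁ : ℕ) (U : Fin (k - 1) → ℕ), 1 ≤ V₁ → (∀ i, 1 ≤ U i) →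
      ∀ ε₁ : ℤ, (ε₁ = 1 ∨ ε₁ = -1) →
      (∑ v₁ ∈ Finset.Icc 1 V₁,
        ∑ u ∈ Fintype.piFinset (fun i : Fin (k - 1) => Finset.Ico (U i) (2 * U i)),
          (∏ i, (tauInt k (u i : ℤ) : ℝ)) *
            (tauInt k (ε₁ * (v₁ : ℤ) + ∏ i, (u i : ℤ)) : ℝ))
        ≤ C * (((V₁ * ∏ i, U i : ℕ) : ℝ) *
            (1 + Real.log ((V₁ * ∏ i, U i : ℕ) : ℝ)) ^ (k ^ 2 + 2)) := by
  have hexp : k * (k - 1) + k + 2 = k ^ 2 + 2 := by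
    obtain ⟨j, rfl⟩ : ∃ j, k = j + 1 := ⟨k - 1, by omega⟩
    simp only [Nat.add_sub_cancel]
    ring
  obtain ⟨C, hC, h⟩ := exists_sum_tau_mul_tau_le (m := k * (k - 1)) (k := k)
    (Nat.mul_pos (by omega) (by omega)) (by omega)
  rw [hexp] at h
  refine ⟨(C + 1) * 2 ^ (k - 1) * (1 + k) ^ (k ^ 2 + 2), by positivity,
    fun V U hV hU ε hε => ?_⟩
  set X : ℕ := ∏ i, U i with hX
  have hX1 : 1 ≤ X := Finset.one_le_prod' fun i _ => hU i
  have hN1 : 1 ≤ 2 ^ (k - 1) * X := Nat.mul_pos (by positivity) hX1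
  have hVX : 1 ≤ V * X := Nat.mul_pos hV hX1
  have hlog0 : 0 ≤ Real.log (V * X : ℕ) := Real.log_natCast_nonneg _
  have hlog : 1 + Real.log (2 * max (2 ^ (k - 1) * X) V : ℕ) ≤
      (1 + k) * (1 + Real.log (V * X : ℕ)) := by
    have hle : 2 * max (2 ^ (k - 1) * X) V ≤ 2 ^ k * (V * X) := by
      have h2 : 2 ^ k = 2 * 2 ^ (k - 1) := by rw [← pow_succ']; congr 1; omega
      rw [h2, mul_assoc]
      refine Nat.mul_le_mul_left _ (max_le ?_ ?_)
      · exact Nat.mul_le_mul_left _ (Nat.le_mul_of_pos_left _ hV)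
      · calc V = 1 * (V * 1) := by ring
          _ ≤ _ := Nat.mul_le_mul Nat.one_le_two_pow (Nat.mul_le_mul_left _ hX1)
    have hpos : (0 : ℝ) < (2 * max (2 ^ (k - 1) * X) V : ℕ) := by
      have := le_max_right (2 ^ (k - 1) * X) V
      exact_mod_cast (by omega : 0 < 2 * max (2 ^ (k - 1) * X) V)
    have hVX0 : ((V * X : ℕ) : ℝ) ≠ 0 := by exact_mod_cast (by omega : V * X ≠ 0)
    calc 1 + Real.log (2 * max (2 ^ (k - 1) * X) V : ℕ)
        ≤ 1 + Real.log (2 ^ k * (V * X) : ℕ) := by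
          have : ((2 * max (2 ^ (k - 1) * X) V : ℕ) : ℝ) ≤ (2 ^ k * (V * X) : ℕ) := by
            exact_mod_cast hle
          gcongr
      _ = 1 + (k * Real.log 2 + Real.log (V * X : ℕ)) := by
          rw [Nat.cast_mul (2 ^ k), Real.log_mul (by positivity) hVX0, Nat.cast_pow,
            Real.log_pow, Nat.cast_ofNat]
      _ ≤ _ := by
          have := Real.log_two_lt_d9
          have hk0 : (0 : ℝ) ≤ k := Nat.cast_nonneg k
          nlinarith [mul_nonneg hk0 hlog0]
  have hlog1 : 0 ≤ 1 + Real.log (2 * max (2 ^ (k - 1) * X) V : ℕ) := by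
    have := Real.log_natCast_nonneg (2 * max (2 ^ (k - 1) * X) V)
    linarith
  calc _ ≤ ∑ v ∈ Finset.Icc 1 V, ∑ n ∈ Finset.Icc 1 (2 ^ (k - 1) * X),
          (tau (k * (k - 1)) n : ℝ) * (tau k (ε * v + n : ℤ).toNat : ℝ) := by
        refine Finset.sum_le_sum fun v _ => ?_
        refine le_trans (le_of_eq ?_) (sum_piFinset_prod_tau_mul_le k (k - 1) U hU
          (fun n => (tau k (ε * v + n : ℤ).toNat : ℝ)) fun n => Nat.cast_nonneg _)
        simp only [tauInt_eq_tau, Int.toNat_natCast, Nat.cast_prod]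
    _ ≤ C * (V * (2 ^ (k - 1) * X : ℕ)) *
          (1 + Real.log (2 * max (2 ^ (k - 1) * X) V : ℕ)) ^ (k ^ 2 + 2) := by
        rw [← Finset.sum_product']
        exact h V _ hV hN1 ε hε
    _ ≤ (C + 1) * (V * (2 ^ (k - 1) * X : ℕ)) *
          ((1 + k) * (1 + Real.log (V * X : ℕ))) ^ (k ^ 2 + 2) := by
        gcongr
        linarith
    _ = _ := by
        rw [mul_pow]
        push_cast
        ring
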